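/- For naturals n > k+1, the double p-adic q-integral of B_{k,n}(x1,x2|q) over Z_p x Z_p equals C(n,k) * beta_{k,q} * (q^2 beta_{n-k,q^{-1}} + (n-k+1) - q). -/

import Mathlib

/-- The q-number [m]_q = (1 - q^m)/(1 - q) for q in the p-adic numbers and integer m. -/
noncomputable def qNumZ (p : ℕ) [Fact p.Prime] (q : ℚ_[p]) (m : ℤ) : ℚ_[p] :=
  (1 - q ^ m) / (1 - q)

/-- `IsPadicQIntegral p q f I` says the bosonic p-adic q-integral
`I_q(f) = lim_N (1/[p^N]_q) ∑_{x=0}^{p^N-1} f(x) q^x` exists and equals `I`. -/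
def IsPadicQIntegral (p : ℕ) [Fact p.Prime] (q : ℚ_[p]) (f : ℕ → ℚ_[p]) (I : ℚ_[p]) : Prop :=
  Filter.Tendsto
    (fun N : ℕ => (∑ x ∈ Finset.range (p ^ N), f x * q ^ x) / qNumZ p q ((p : ℤ) ^ N))
    Filter.atTop (nhds I)

/-- The double bosonic p-adic q-integral over ℤ_p × ℤ_p. -/
def IsPadicQIntegral2 (p : ℕ) [Fact p.Prime] (q : ℚ_[p]) (f : ℕ → ℕ → ℚ_[p]) (I : ℚ_[p]) : Prop :=
  Filter.Tendsto
    (fun N : ℕ =>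
      (∑ x1 ∈ Finset.range (p ^ N), ∑ x2 ∈ Finset.range (p ^ N),
        f x1 x2 * q ^ x1 * q ^ x2) / (qNumZ p q ((p : ℤ) ^ N)) ^ 2)
    Filter.atTop (nhds I)

/-!
Under `T = q ^ x` the integral becomes a linear functional on polynomials in `T`: geometric sums
give `I_q(T ^ j) = (j + 1) / [j + 1]_q`. On monomials one reads off the shift relation
`q * I_q(P(q * T)) = I_q(P(T)) + (q - 1) * (T * P)'(1)` and the reflection
`I_{q⁻¹}(P(T⁻¹)) = I_q(P(q * T))`. Up to the factor `(1 - q⁻¹) ^ m`, the integrand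
`[1 - x]_{q⁻¹} ^ m` is `(1 - q⁻¹ * T) ^ m`, while `beta_{m, q⁻¹}` is the `I_q`-integral of
`(1 - q * T) ^ m` by reflection; two shifts join them. The double integral of a product is the
product of the integrals.
-/

open Filter Topology Polynomial

section PowersTendingToOne

theorem tendsto_pow_prime_pow_one {p : ℕ} [Fact p.Prime] {R : Type*} [NormedRing R]
    [Algebra ℤ_[p] R] [IsBoundedSMul ℤ_[p] R] [IsUltrametricDist R] [CompleteSpace R] {q : R}
    (hq : Tendsto (fun n : ℕ => (q - 1) ^ n) atTop (𝓝 0)) :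
    Tendsto (fun N : ℕ => q ^ p ^ N) atTop (𝓝 1) := by
  let κ := PadicInt.addChar_of_value_at_one (p := p) (q - 1) hq
  have hκ : Continuous κ := PadicInt.continuous_addChar_of_value_at_one hq
  have hκ_pow (N : ℕ) : κ ((p : ℤ_[p]) ^ N) = q ^ p ^ N := by
    rw [← Nat.cast_pow, ← nsmul_one, AddChar.map_nsmul_eq_pow,
      PadicInt.addChar_of_value_at_one_def, add_sub_cancel]
  have hp : Tendsto (fun N : ℕ => (p : ℤ_[p]) ^ N) atTop (𝓝 0) :=
    tendsto_pow_atTop_nhds_zero_of_norm_lt_one Padic.norm_p_lt_one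
  simpa only [Function.comp_def, hκ_pow, AddChar.map_zero_eq_one] using (hκ.tendsto 0).comp hp

theorem tendsto_pow_prime_pow_one_of_norm_one_sub_lt_one {p : ℕ} [Fact p.Prime] {q : ℚ_[p]}
    (hq : ‖1 - q‖ < 1) : Tendsto (fun N : ℕ => q ^ p ^ N) atTop (𝓝 1) := by
  have : IsBoundedSMul ℤ_[p] ℚ_[p] := .of_norm_smul_le fun r x => by
    rw [Algebra.smul_def, norm_mul, PadicInt.algebraMap_apply, PadicInt.norm_def]
  rw [norm_sub_rev] at hq
  exact tendsto_pow_prime_pow_one (tendsto_pow_atTop_nhds_zero_of_norm_lt_one hq)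

theorem tendsto_pow_sub_one_div_sub_one {ι K : Type*} [Field K] [TopologicalSpace K]
    [IsTopologicalRing K] {l : Filter ι} {u : ι → K} (hu : Tendsto u l (𝓝 1))
    (hu_ne : ∀ i, u i ≠ 1) (a : ℕ) :
    Tendsto (fun i => (u i ^ a - 1) / (u i - 1)) l (𝓝 a) := by
  have h_sum : Tendsto (fun i => ∑ j ∈ Finset.range a, u i ^ j) l
      (𝓝 (∑ j ∈ Finset.range a, 1 ^ j)) :=
    tendsto_finsetSum _ fun j _ => hu.pow j
  simpa only [one_pow, Finset.sum_const, Finset.card_range, nsmul_one,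
    fun i => geom_sum_eq (hu_ne i) a] using h_sum

end PowersTendingToOne

section Functional

variable {K : Type*} [Field K] {q : K}

/-- The bosonic p-adic q-integral on polynomials in `T = q ^ x`: the linear functional sending
`T ^ j` to `(j + 1) / [j + 1]_q`. It is meaningful only if no positive power of `q` equals `1`. -/
noncomputable def qVolkenborn (q : K) : K[X] →ₗ[K] K :=
  lsum fun j => LinearMap.mulRight K (((j : K) + 1) * ((1 - q) / (1 - q ^ (j + 1))))

@[simp]
theorem qVolkenborn_monomial (q : K) (j : ℕ) (a : K) :
    qVolkenborn q (monomial j a) = a * (((j : K) + 1) * ((1 - q) / (1 - q ^ (j + 1)))) := by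
  simp [qVolkenborn, lsum_apply, sum_monomial_index, mul_assoc]

theorem monomial_comp_C_mul_X {R : Type*} [CommSemiring R] (q : R) (j : ℕ) (a : R) :
    (monomial j a).comp (C q * X) = monomial j (a * q ^ j) := by
  rw [monomial_comp, mul_pow, ← C_pow, ← mul_assoc, ← C_mul, C_mul_X_pow_eq_monomial]

theorem mul_qVolkenborn_comp_C_mul_X (hq : ∀ a ≠ 0, q ^ a ≠ 1) (P : K[X]) :
    q * qVolkenborn q (P.comp (C q * X)) =
      qVolkenborn q P + (q - 1) * (derivative (X * P)).eval 1 := by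
  induction P using Polynomial.induction_on' with
  | add P Q hP hQ =>
    rw [add_comp, map_add, map_add, mul_add X, derivative_add, eval_add]
    linear_combination hP + hQ
  | monomial j a =>
    have hj : 1 - q ^ (j + 1) ≠ 0 := sub_ne_zero.2 (hq (j + 1) j.succ_ne_zero).symm
    rw [monomial_comp_C_mul_X, X_mul_monomial, derivative_monomial, eval_monomial,
      qVolkenborn_monomial, qVolkenborn_monomial]
    push_cast
    field_simp
    ring

theorem qVolkenborn_inv (hq0 : q ≠ 0) (P : K[X]) :
    qVolkenborn q⁻¹ P = qVolkenborn q (P.comp (C q * X)) := by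
  induction P using Polynomial.induction_on' with
  | add P Q hP hQ => rw [add_comp, map_add, map_add, hP, hQ]
  | monomial j a =>
    have h_one_sub (i : ℕ) : 1 - q⁻¹ ^ i = (1 - q ^ i) * -(q ^ i)⁻¹ := by
      rw [inv_pow]
      field_simp
      ring
    have h_ratio : (1 - q⁻¹) / (1 - q⁻¹ ^ (j + 1)) = q ^ j * ((1 - q) / (1 - q ^ (j + 1))) := by
      rw [h_one_sub, ← pow_one q⁻¹, h_one_sub, mul_div_mul_comm, pow_one]
      field_simp
      ring
    rw [monomial_comp_C_mul_X, qVolkenborn_monomial, qVolkenborn_monomial, h_ratio]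
    ring

theorem eval_one_derivative_X_mul_one_sub_C_mul_X_pow {R : Type*} [CommRing R] (c : R) (m : ℕ) :
    (derivative (X * (1 - C c * X) ^ m)).eval 1 = (1 - c) ^ m - m * c * (1 - c) ^ (m - 1) := by
  rw [derivative_mul, derivative_X, derivative_pow, derivative_sub, derivative_one,
    derivative_C_mul, derivative_X]
  simp only [map_natCast, eval_add, eval_mul, eval_sub, eval_pow, eval_natCast, eval_one,
    eval_zero, eval_X, eval_C]
  ring

theorem qVolkenborn_one_sub_C_inv_mul_X_pow (hq0 : q ≠ 0) (hq : ∀ a ≠ 0, q ^ a ≠ 1) {m : ℕ}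
    (hm : 2 ≤ m) :
    qVolkenborn q ((1 - C q⁻¹ * X) ^ m) =
      q ^ 2 * qVolkenborn q⁻¹ ((1 - X) ^ m) + (1 - q⁻¹) ^ m * (m + 1 - q) := by
  have h_comp (c : K) : ((1 - C c * X) ^ m).comp (C q * X) = (1 - C (c * q) * X) ^ m := by
    simp [mul_assoc]
  have h_shift (c : K) : q * qVolkenborn q ((1 - C (c * q) * X) ^ m) =
      qVolkenborn q ((1 - C c * X) ^ m) +
        (q - 1) * ((1 - c) ^ m - m * c * (1 - c) ^ (m - 1)) := by
    rw [← h_comp, mul_qVolkenborn_comp_C_mul_X hq,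
      eval_one_derivative_X_mul_one_sub_C_mul_X_pow]
  have h_reflect : qVolkenborn q⁻¹ ((1 - X) ^ m) = qVolkenborn q ((1 - C (1 * q) * X) ^ m) := by
    rw [qVolkenborn_inv hq0, ← h_comp, C_1, one_mul]
  have h_shift_one := h_shift 1
  have h_shift_inv := h_shift q⁻¹
  rw [sub_self, zero_pow (by omega), zero_pow (by omega)] at h_shift_one
  rw [inv_mul_cancel₀ hq0] at h_shift_inv
  obtain ⟨d, rfl⟩ : ∃ d, m = d + 1 := ⟨m - 1, by omega⟩
  have h_factor : (q - 1) * q⁻¹ = 1 - q⁻¹ := by field_simp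
  rw [h_reflect]
  simp only [Nat.add_sub_cancel] at h_shift_inv
  push_cast at h_shift_inv ⊢
  linear_combination -h_shift_inv - q * h_shift_one + (d + 1) * (1 - q⁻¹) ^ d * h_factor

end Functional

section Integral

variable {p : ℕ} [Fact p.Prime] {q : ℚ_[p]}

theorem qNumZ_prime_pow (N : ℕ) : qNumZ p q ((p : ℤ) ^ N) = (q ^ p ^ N - 1) / (q - 1) := by
  rw [qNumZ, ← Nat.cast_pow, zpow_natCast, ← neg_div_neg_eq, neg_sub, neg_sub]

namespace IsPadicQIntegral

variable {f g : ℕ → ℚ_[p]} {I J : ℚ_[p]}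

theorem unique (hI : IsPadicQIntegral p q f I) (hJ : IsPadicQIntegral p q f J) : I = J :=
  tendsto_nhds_unique hI hJ

theorem add (hf : IsPadicQIntegral p q f I) (hg : IsPadicQIntegral p q g J) :
    IsPadicQIntegral p q (fun x => f x + g x) (I + J) := by
  simpa only [IsPadicQIntegral, add_mul, Finset.sum_add_distrib, add_div] using Tendsto.add hf hg

theorem const_mul (c : ℚ_[p]) (hf : IsPadicQIntegral p q f I) :
    IsPadicQIntegral p q (fun x => c * f x) (c * I) := by
  simpa only [IsPadicQIntegral, mul_assoc, ← Finset.mul_sum, mul_div_assoc]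
    using Tendsto.const_mul c hf

theorem mul_prod (hf : IsPadicQIntegral p q f I) (hg : IsPadicQIntegral p q g J) :
    IsPadicQIntegral2 p q (fun x₁ x₂ => f x₁ * g x₂) (I * J) := by
  refine (Tendsto.mul hf hg).congr fun N => ?_
  rw [div_mul_div_comm, ← sq, Finset.sum_mul_sum]
  simp only [mul_assoc, mul_left_comm]

end IsPadicQIntegral

-- Here `[p ^ N]_q = 0` for `N ≥ M`, so the averages have the junk value `_ / 0 = 0`.
theorem isPadicQIntegral_zero_of_pow_eq_one {M : ℕ} (hM : q ^ p ^ M = 1) (f : ℕ → ℚ_[p]) :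
    IsPadicQIntegral p q f 0 := by
  refine tendsto_const_nhds.congr' ?_
  filter_upwards [eventually_ge_atTop M] with N hMN
  obtain ⟨r, rfl⟩ := Nat.exists_eq_add_of_le hMN
  rw [qNumZ_prime_pow, pow_add, pow_mul, hM, one_pow, sub_self, zero_div, div_zero]

variable (hq : Tendsto (fun N : ℕ => q ^ p ^ N) atTop (𝓝 1)) (hq_ne : ∀ N : ℕ, q ^ p ^ N ≠ 1)
include hq hq_ne

theorem tendsto_pow_sub_one_mul_geom_sum_div_qNumZ (a : ℕ) :
    Tendsto (fun N : ℕ => (q ^ a - 1) *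
        ((∑ x ∈ Finset.range (p ^ N), (q ^ a) ^ x) / qNumZ p q ((p : ℤ) ^ N)))
      atTop (𝓝 ((q - 1) * a)) := by
  refine ((tendsto_pow_sub_one_div_sub_one hq hq_ne a).const_mul (q - 1)).congr fun N => ?_
  rw [qNumZ_prime_pow, mul_div_assoc', mul_div_assoc', mul_geom_sum, div_div_eq_mul_div,
    pow_right_comm, mul_comm]

theorem pow_ne_one_of_pow_prime_pow_ne_one {a : ℕ} (ha : a ≠ 0) : q ^ a ≠ 1 := by
  intro h
  have h_tendsto := tendsto_pow_sub_one_mul_geom_sum_div_qNumZ hq hq_ne a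
  simp only [h, sub_self, zero_mul] at h_tendsto
  have hq1 : q - 1 ≠ 0 := sub_ne_zero.2 (by simpa using hq_ne 0)
  exact mul_ne_zero hq1 (Nat.cast_ne_zero.2 ha)
    (tendsto_nhds_unique h_tendsto tendsto_const_nhds)

theorem isPadicQIntegral_pow (j : ℕ) :
    IsPadicQIntegral p q (fun x => (q ^ x) ^ j) ((j + 1) * ((1 - q) / (1 - q ^ (j + 1)))) := by
  have hj : q ^ (j + 1) - 1 ≠ 0 :=
    sub_ne_zero.2 (pow_ne_one_of_pow_prime_pow_ne_one hq hq_ne j.succ_ne_zero)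
  have h_limit : (q ^ (j + 1) - 1)⁻¹ * ((q - 1) * ((j + 1 : ℕ) : ℚ_[p])) =
      (j + 1) * ((1 - q) / (1 - q ^ (j + 1))) := by
    rw [← neg_sub q 1, ← neg_sub (q ^ (j + 1)) 1, neg_div_neg_eq]
    push_cast
    ring
  rw [← h_limit]
  refine ((tendsto_pow_sub_one_mul_geom_sum_div_qNumZ hq hq_ne (j + 1)).const_mul _).congr
    fun N => ?_
  rw [inv_mul_cancel_left₀ hj]
  simp only [← pow_succ, pow_right_comm q _ (j + 1)]

theorem isPadicQIntegral_eval_pow (P : ℚ_[p][X]) :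
    IsPadicQIntegral p q (fun x => P.eval (q ^ x)) (qVolkenborn q P) := by
  induction P using Polynomial.induction_on' with
  | add P Q hP hQ => simpa only [eval_add, map_add] using hP.add hQ
  | monomial j a =>
    simpa only [eval_monomial, qVolkenborn_monomial]
      using (isPadicQIntegral_pow hq hq_ne j).const_mul a

theorem isPadicQIntegral_one_sub_mul_pow_div_pow (c d : ℚ_[p]) (m : ℕ) :
    IsPadicQIntegral p q (fun x => ((1 - c * q ^ x) / d) ^ m)
      ((d ^ m)⁻¹ * qVolkenborn q ((1 - C c * X) ^ m)) := by
  convert (isPadicQIntegral_eval_pow hq hq_ne ((1 - C c * X) ^ m)).const_mul (d ^ m)⁻¹ using 2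
    with x
  rw [div_pow, div_eq_inv_mul, eval_pow, eval_sub, eval_one, eval_C_mul, eval_X]

theorem isPadicQIntegral_qNumZ_inv_one_sub_pow {m : ℕ} (hm : 2 ≤ m) {β : ℚ_[p]}
    (hβ : IsPadicQIntegral p q⁻¹ (fun x => qNumZ p q⁻¹ (x : ℤ) ^ m) β) :
    IsPadicQIntegral p q (fun x => qNumZ p q⁻¹ (1 - x) ^ m) (q ^ 2 * β + (m + 1) - q) := by
  have hq0 : q ≠ 0 := by
    rintro rfl
    simp [(Fact.out : p.Prime).ne_zero] at hq
  have hq1 : q ≠ 1 := by simpa using hq_ne 0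
  have hq_inv : Tendsto (fun N : ℕ => q⁻¹ ^ p ^ N) atTop (𝓝 1) := by
    simpa only [inv_pow, inv_one] using hq.inv₀ one_ne_zero
  have hq_inv_ne (N : ℕ) : q⁻¹ ^ p ^ N ≠ 1 := by
    simpa only [inv_pow, ne_eq, inv_eq_one] using hq_ne N
  have h_denom : (1 - q⁻¹) ^ m ≠ 0 :=
    pow_ne_zero m (sub_ne_zero.2 fun h => hq1 (inv_eq_one.1 h.symm))
  have hβ_value : β = ((1 - q⁻¹) ^ m)⁻¹ * qVolkenborn q⁻¹ ((1 - C 1 * X) ^ m) := by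
    refine hβ.unique ?_
    simpa only [qNumZ, zpow_natCast, one_mul] using
      isPadicQIntegral_one_sub_mul_pow_div_pow hq_inv hq_inv_ne 1 (1 - q⁻¹) m
  have h_value : q ^ 2 * β + (m + 1) - q =
      ((1 - q⁻¹) ^ m)⁻¹ * qVolkenborn q ((1 - C q⁻¹ * X) ^ m) := by
    rw [qVolkenborn_one_sub_C_inv_mul_X_pow hq0
      (fun _ => pow_ne_one_of_pow_prime_pow_ne_one hq hq_ne) hm, hβ_value, C_1, one_mul, mul_add,
      inv_mul_cancel_left₀ h_denom]
    ring
  rw [h_value]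
  simpa only [qNumZ, zpow_sub₀ (inv_ne_zero hq0), zpow_one, zpow_natCast, inv_pow,
    div_inv_eq_mul] using isPadicQIntegral_one_sub_mul_pow_div_pow hq hq_ne q⁻¹ (1 - q⁻¹) m

end Integral

theorem qBernstein_double_integral_general (p : ℕ) [Fact p.Prime] (q : ℚ_[p])
    (hq : ‖1 - q‖ < 1) (n k : ℕ) (hnk : k + 1 < n) (Bk Bnk : ℚ_[p])
    (hBk : IsPadicQIntegral p q (fun x : ℕ => (qNumZ p q (x : ℤ)) ^ k) Bk)
    (hBnk : IsPadicQIntegral p q⁻¹ (fun x : ℕ => (qNumZ p q⁻¹ (x : ℤ)) ^ (n - k)) Bnk) :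
    IsPadicQIntegral2 p q
      (fun x1 x2 : ℕ =>
        (n.choose k : ℚ_[p]) * (qNumZ p q (x1 : ℤ)) ^ k * (qNumZ p q⁻¹ (1 - x2)) ^ (n - k))
      ((n.choose k : ℚ_[p]) * Bk * (q ^ 2 * Bnk + ((n - k : ℕ) + 1 : ℚ_[p]) - q)) := by
  have h_left := hBk.const_mul (n.choose k : ℚ_[p])
  by_cases h_root : ∃ M : ℕ, q ^ p ^ M = 1
  · obtain ⟨M, hM⟩ := h_root
    have hBk_zero : Bk = 0 := hBk.unique (isPadicQIntegral_zero_of_pow_eq_one hM _)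
    simpa only [hBk_zero, mul_zero, zero_mul] using
      h_left.mul_prod (isPadicQIntegral_zero_of_pow_eq_one hM
        fun x => qNumZ p q⁻¹ (1 - x) ^ (n - k))
  · have hq_tendsto := tendsto_pow_prime_pow_one_of_norm_one_sub_lt_one hq
    have h_right := isPadicQIntegral_qNumZ_inv_one_sub_pow hq_tendsto
      (not_exists.1 h_root) (by omega) hBnk
    exact h_left.mul_prod h_right

theorem qBernstein_double_integral (p : ℕ) [Fact p.Prime] (q : ℚ_[p])
    (hq : ‖1 - q‖ < 1) (n k : ℕ) (hnk : k + 1 < n) (D Bk Bnk : ℚ_[p])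
    (hD : IsPadicQIntegral2 p q
      (fun x1 x2 : ℕ =>
        (n.choose k : ℚ_[p]) * (qNumZ p q (x1 : ℤ)) ^ k * (qNumZ p q⁻¹ (1 - x2)) ^ (n - k)) D)
    (hBk : IsPadicQIntegral p q (fun x : ℕ => (qNumZ p q (x : ℤ)) ^ k) Bk)
    (hBnk : IsPadicQIntegral p q⁻¹ (fun x : ℕ => (qNumZ p q⁻¹ (x : ℤ)) ^ (n - k)) Bnk) :
    D = (n.choose k : ℚ_[p]) * Bk * (q ^ 2 * Bnk + ((n - k : ℕ) + 1 : ℚ_[p]) - q) :=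
  tendsto_nhds_unique hD (qBernstein_double_integral_general p q hq n k hnk Bk Bnk hBk hBnk)
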